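/- Let Ω be a countably infinite set and r a measure representation over Ω. Define, for open A ⊆ Ω^∞, r(A) := Σ_{σ∈E} r(σ) where E is any prefix-free set with [E]≺ = A, and for arbitrary C ⊆ Ω^∞ define μ_r(C) := inf{ r(A) : C ⊆ A, A open }. Then μ_r is an outer measure on Ω^∞ satisfying μ_r(A) = r(A) for every open set A. -/

import Mathlib

open scoped ENNReal

/-- A set of finite strings is prefix-free. -/
def prefixFree {Γ : Type*} (E : Set (List Γ)) : Prop :=
  ∀ σ ∈ E, ∀ τ ∈ E, σ <+: τ → σ = τ

/-- The prefix of length `n` of an infinite sequence. -/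
def pre {Γ : Type*} (α : ℕ → Γ) (n : ℕ) : List Γ := List.ofFn fun i : Fin n => α i

/-- The open set generated by a set of strings: sequences having some prefix in `S`. -/
def cyl {Γ : Type*} (S : Set (List Γ)) : Set (ℕ → Γ) := {α | ∃ n, pre α n ∈ S}

/-- `r` is a measure representation over `Ω`: values in `[0,1]` and
`r σ = ∑_{a ∈ Ω} r (σ a)` for every string `σ`. -/
def MeasRep {Ω : Type*} (r : List Ω → ℝ) : Prop :=
  (∀ σ, 0 ≤ r σ ∧ r σ ≤ 1) ∧ ∀ σ : List Ω, HasSum (fun a : Ω => r (σ ++ [a])) (r σ)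

/-- The outer measure induced by a measure representation `r`:
`μ_r C` is the infimum of `r(A)` over open sets `A ⊇ C`, where every open set is
generated by a prefix-free set. -/
noncomputable def muR {Ω : Type*} (r : List Ω → ℝ) (C : Set (ℕ → Ω)) : ℝ≥0∞ :=
  ⨅ (E : Set (List Ω)) (_ : prefixFree E) (_ : C ⊆ cyl E),
    ∑' σ : E, ENNReal.ofReal (r (σ : List Ω))

/-!
Prefix-minimal strings of `S` form a prefix-free set generating the same open set, so in `μ_r`
arbitrary covering sets of strings may be used, and countable subadditivity follows by uniting
covers.

The value on open sets rests on `r(E) ≤ r(F)` whenever `E` is prefix-free and `[E]≺ ⊆ [F]≺`. Let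
`v(ρ)` be `r(ρ)` if `F` contains a prefix of `ρ`, and otherwise the total weight of the extensions
of `ρ` in `F`. Then `v` is superadditive along the tree of strings, so a Kraft inequality gives
`∑_{σ ∈ E} v(σ) ≤ v([]) ≤ r(F)`. Moreover `r(σ) ≤ v(σ)` for `σ ∈ E`: a failure at `σ` is inherited
by some child, hence spreads along an infinite sequence extending `σ`, and that sequence has no
prefix in `F`.
-/

section Strings

variable {Γ : Type*}

@[simp]
lemma length_pre (α : ℕ → Γ) (n : ℕ) : (pre α n).length = n :=
  List.length_ofFn

lemma pre_succ (α : ℕ → Γ) (n : ℕ) : pre α (n + 1) = pre α n ++ [α n] :=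
  List.ofFn_succ_last

lemma pre_prefix_pre (α : ℕ → Γ) {m n : ℕ} (hmn : m ≤ n) : pre α m <+: pre α n := by
  induction n, hmn using Nat.le_induction with
  | base => exact List.prefix_rfl
  | succ n _ ih =>
    rw [pre_succ]
    exact ih.trans (List.prefix_append _ _)

lemma pre_length_eq_of_prefix_pre {α : ℕ → Γ} {n : ℕ} {σ : List Γ} (h : σ <+: pre α n) :
    pre α σ.length = σ := by
  have hσn : σ.length ≤ n := by simpa using h.length_le
  have hpre : pre α σ.length <+: σ :=
    List.prefix_of_prefix_length_le (pre_prefix_pre α hσn) h (length_pre α _).le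
  exact hpre.eq_of_length (length_pre α _)

lemma exists_append_singleton_prefix {ρ τ : List Γ} (h : ρ <+: τ) (hne : ρ ≠ τ) :
    ∃ a, ρ ++ [a] <+: τ := by
  obtain ⟨_ | ⟨a, t⟩, rfl⟩ := h
  · simp at hne
  · exact ⟨a, t, by simp⟩

lemma eq_of_append_singleton_prefix {ρ τ : List Γ} {a b : Γ} (ha : ρ ++ [a] <+: τ)
    (hb : ρ ++ [b] <+: τ) : a = b := by
  simpa using List.prefix_of_prefix_length_le ha hb (by simp)

lemma exists_forall_pre_of_forall_exists_append {P : List Γ → Prop} {σ : List Γ} (hσ : P σ)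
    (hP : ∀ ρ, P ρ → ∃ a, P (ρ ++ [a])) :
    ∃ α : ℕ → Γ, pre α σ.length = σ ∧ ∀ n, P (pre α (σ.length + n)) := by
  have : Nonempty Γ := (hP σ hσ).nonempty
  choose! next hnext using hP
  let branch (n : ℕ) : List Γ := (fun ρ => ρ ++ [next ρ])^[n] σ
  let α (i : ℕ) : Γ := σ[i]?.getD (next (branch (i - σ.length)))
  have hασ : pre α σ.length = σ :=
    List.ext_getElem (length_pre α _) fun i _ _ => by simp [pre, α]
  have hbranch (n : ℕ) : pre α (σ.length + n) = branch n := by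
    induction n with
    | zero => exact hασ
    | succ n ih =>
      rw [← add_assoc, pre_succ, ih]
      simp [α, branch, Function.iterate_succ_apply']
  refine ⟨α, hασ, fun n => ?_⟩
  induction n with
  | zero => rwa [add_zero, hασ]
  | succ n ih =>
    rw [hbranch] at ih ⊢
    simpa only [branch, Function.iterate_succ_apply'] using hnext _ ih

lemma cyl_mono {S T : Set (List Γ)} (h : S ⊆ T) : cyl S ⊆ cyl T :=
  fun _ ⟨n, hn⟩ => ⟨n, h hn⟩

lemma prefixFree.mono {E F : Set (List Γ)} (hF : prefixFree F) (h : E ⊆ F) : prefixFree E :=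
  fun σ hσ τ hτ => hF σ (h hσ) τ (h hτ)

/-- The strings of `S` none of whose proper prefixes lies in `S`; they form the canonical
prefix-free set generating `cyl S`. -/
def prefixMinimal (S : Set (List Γ)) : Set (List Γ) :=
  {σ ∈ S | ∀ τ ∈ S, τ <+: σ → τ = σ}

lemma prefixMinimal_subset (S : Set (List Γ)) : prefixMinimal S ⊆ S :=
  fun _ hσ => hσ.1

lemma prefixFree_prefixMinimal (S : Set (List Γ)) : prefixFree (prefixMinimal S) :=
  fun σ hσ _ hτ => hτ.2 σ hσ.1

lemma cyl_subset_cyl_prefixMinimal (S : Set (List Γ)) : cyl S ⊆ cyl (prefixMinimal S) := by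
  classical
  intro α hα
  refine ⟨Nat.find hα, Nat.find_spec hα, fun τ hτ hprefix => ?_⟩
  have hpre : pre α τ.length = τ := pre_length_eq_of_prefix_pre hprefix
  refine hprefix.eq_of_length_le ?_
  rw [length_pre]
  exact Nat.find_min' hα (hpre.symm ▸ hτ)

/-- The strings of `S` that extend `ρ`, including `ρ` itself if `ρ ∈ S`. -/
def extensionsIn (S : Set (List Γ)) (ρ : List Γ) : Set (List Γ) :=
  {τ ∈ S | ρ <+: τ}

lemma extensionsIn_append_singleton_subset (S : Set (List Γ)) (ρ : List Γ) (a : Γ) :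
    extensionsIn S (ρ ++ [a]) ⊆ extensionsIn S ρ :=
  fun _ hτ => ⟨hτ.1, (List.prefix_append _ _).trans hτ.2⟩

lemma pairwise_disjoint_extensionsIn_append_singleton (S : Set (List Γ)) (ρ : List Γ) :
    (Set.univ : Set Γ).PairwiseDisjoint fun a => extensionsIn S (ρ ++ [a]) :=
  fun _ _ _ _ hab => Set.disjoint_left.2 fun _ ha hb =>
    hab (eq_of_append_singleton_prefix ha.2 hb.2)

end Strings

section Kraft

lemma tsum_le_of_subset_singleton {β : Type*} {f : β → ℝ≥0∞} {s : Set β} {b : β} (h : s ⊆ {b}) :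
    ∑' x : s, f x ≤ f b :=
  (ENNReal.tsum_mono_subtype f h).trans_eq (tsum_singleton b f)

variable {Γ : Type*} {v : List Γ → ℝ≥0∞} {E : Set (List Γ)}

lemma prefixFree.tsum_le_of_forall_length_le (hv : ∀ ρ, ∑' a, v (ρ ++ [a]) ≤ v ρ)
    (hE : prefixFree E) (k : ℕ) (ρ : List Γ) (hρ : ∀ τ ∈ E, ρ <+: τ)
    (hk : ∀ τ ∈ E, τ.length ≤ ρ.length + k) : ∑' τ : E, v τ ≤ v ρ := by
  induction k generalizing E ρ with
  | zero =>
    exact tsum_le_of_subset_singleton fun τ hτ => ((hρ τ hτ).eq_of_length_le (hk τ hτ)).symm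
  | succ k ih =>
    by_cases hρE : ρ ∈ E
    · exact tsum_le_of_subset_singleton fun τ hτ => (hE ρ hρE τ hτ (hρ τ hτ)).symm
    have hcover : E ⊆ ⋃ a, extensionsIn E (ρ ++ [a]) := fun τ hτ => by
      obtain ⟨a, ha⟩ := exists_append_singleton_prefix (hρ τ hτ) (fun h => hρE (h ▸ hτ))
      exact Set.mem_iUnion.2 ⟨a, hτ, ha⟩
    have hchild (a : Γ) : ∑' τ : extensionsIn E (ρ ++ [a]), v τ ≤ v (ρ ++ [a]) := by
      refine ih (hE.mono fun τ hτ => hτ.1) _ (fun τ hτ => hτ.2) fun τ hτ => ?_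
      have := hk τ hτ.1
      simp only [List.length_append, List.length_singleton]
      omega
    calc ∑' τ : E, v τ
        ≤ ∑' τ : ⋃ a, extensionsIn E (ρ ++ [a]), v τ := ENNReal.tsum_mono_subtype v hcover
      _ ≤ ∑' a, ∑' τ : extensionsIn E (ρ ++ [a]), v τ := ENNReal.tsum_iUnion_le_tsum v _
      _ ≤ ∑' a, v (ρ ++ [a]) := ENNReal.tsum_le_tsum hchild
      _ ≤ v ρ := hv ρ

theorem prefixFree.tsum_le_apply_nil (hv : ∀ ρ, ∑' a, v (ρ ++ [a]) ≤ v ρ) (hE : prefixFree E) :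
    ∑' τ : E, v τ ≤ v [] := by
  rw [ENNReal.tsum_eq_iSup_sum]
  refine iSup_le fun s => ?_
  let t : Finset (List Γ) := s.map (Function.Embedding.subtype _)
  have ht : (t : Set (List Γ)) ⊆ E := by simp [t]
  calc ∑ τ ∈ s, v τ = ∑' τ : (t : Set (List Γ)), v τ := by
        rw [Finset.tsum_subtype', Finset.sum_map]; rfl
    _ ≤ v [] := (hE.mono ht).tsum_le_of_forall_length_le hv (t.sup List.length) []
        (fun τ _ => List.nil_prefix) fun τ hτ => by
          simpa using Finset.le_sup (f := List.length) hτ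

end Kraft

section CoverWeight

variable {Γ : Type*} {R : List Γ → ℝ≥0∞} {F : Set (List Γ)} {ρ : List Γ}

open scoped Classical in
/-- An upper bound, read off from `F`, for the weight of the sequences in `cyl F` that extend `ρ`.
If `R` is additive, then this is superadditive along the tree of strings even when `F` is not
prefix-free. -/
noncomputable def coverWeight (R : List Γ → ℝ≥0∞) (F : Set (List Γ)) (ρ : List Γ) : ℝ≥0∞ :=
  if ∃ τ ∈ F, τ <+: ρ then R ρ else ∑' τ : extensionsIn F ρ, R τ

lemma coverWeight_of_prefix_mem {τ : List Γ} (hτ : τ ∈ F) (h : τ <+: ρ) :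
    coverWeight R F ρ = R ρ :=
  if_pos ⟨τ, hτ, h⟩

lemma coverWeight_of_forall_not_prefix (h : ∀ τ ∈ F, ¬ τ <+: ρ) :
    coverWeight R F ρ = ∑' τ : extensionsIn F ρ, R τ :=
  if_neg fun ⟨τ, hτ, hτρ⟩ => h τ hτ hτρ

lemma coverWeight_le_tsum_extensionsIn (h : ∀ τ ∈ F, τ <+: ρ → τ = ρ) :
    coverWeight R F ρ ≤ ∑' τ : extensionsIn F ρ, R τ := by
  by_cases hρ : ρ ∈ F
  · rw [coverWeight_of_prefix_mem hρ List.prefix_rfl]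
    exact ENNReal.le_tsum (f := fun τ : extensionsIn F ρ => R τ) ⟨ρ, hρ, List.prefix_rfl⟩
  · exact (coverWeight_of_forall_not_prefix fun τ hτ hτρ => hρ (h τ hτ hτρ ▸ hτ)).le

lemma coverWeight_nil_le_tsum : coverWeight R F [] ≤ ∑' τ : F, R τ :=
  (coverWeight_le_tsum_extensionsIn fun _ _ => List.prefix_nil.1).trans
    (ENNReal.tsum_mono_subtype R fun _ hτ => hτ.1)

lemma tsum_coverWeight_append_singleton_le (hR : ∀ ρ, ∑' a, R (ρ ++ [a]) ≤ R ρ)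
    (F : Set (List Γ)) (ρ : List Γ) :
    ∑' a, coverWeight R F (ρ ++ [a]) ≤ coverWeight R F ρ := by
  by_cases hρ : ∃ τ ∈ F, τ <+: ρ
  · obtain ⟨τ, hτ, hτρ⟩ := hρ
    simp only [coverWeight_of_prefix_mem hτ hτρ,
      coverWeight_of_prefix_mem hτ (hτρ.trans (List.prefix_append _ _)), hR ρ]
  · push Not at hρ
    have hchild (a : Γ) :
        coverWeight R F (ρ ++ [a]) ≤ ∑' τ : extensionsIn F (ρ ++ [a]), R τ :=
      coverWeight_le_tsum_extensionsIn fun τ hτ hτρ =>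
        (List.prefix_concat_iff.1 hτρ).resolve_right (hρ τ hτ)
    calc ∑' a, coverWeight R F (ρ ++ [a])
        ≤ ∑' a, ∑' τ : extensionsIn F (ρ ++ [a]), R τ := ENNReal.tsum_le_tsum hchild
      _ = ∑' τ : ⋃ a, extensionsIn F (ρ ++ [a]), R τ :=
        (ENNReal.tsum_biUnion (pairwise_disjoint_extensionsIn_append_singleton F ρ)).symm
      _ ≤ ∑' τ : extensionsIn F ρ, R τ :=
        ENNReal.tsum_mono_subtype R
          (Set.iUnion_subset (extensionsIn_append_singleton_subset F ρ))
      _ = coverWeight R F ρ := (coverWeight_of_forall_not_prefix hρ).symm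

lemma exists_coverWeight_append_singleton_lt (hR : ∀ ρ, ∑' a, R (ρ ++ [a]) = R ρ)
    (hρ : coverWeight R F ρ < R ρ) : ∃ a, coverWeight R F (ρ ++ [a]) < R (ρ ++ [a]) := by
  by_contra! hle
  refine hρ.not_ge ?_
  calc R ρ = ∑' a, R (ρ ++ [a]) := (hR ρ).symm
    _ ≤ ∑' a, coverWeight R F (ρ ++ [a]) := ENNReal.tsum_le_tsum hle
    _ ≤ coverWeight R F ρ := tsum_coverWeight_append_singleton_le (fun σ => (hR σ).le) F ρ

lemma le_coverWeight_of_cyl_subset (hR : ∀ ρ, ∑' a, R (ρ ++ [a]) = R ρ) {σ : List Γ}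
    (hσ : cyl {σ} ⊆ cyl F) : R σ ≤ coverWeight R F σ := by
  by_contra! hlt
  obtain ⟨α, hασ, hα⟩ := exists_forall_pre_of_forall_exists_append
    (P := fun ρ => coverWeight R F ρ < R ρ) hlt
    fun ρ => exists_coverWeight_append_singleton_lt hR
  obtain ⟨n, hn⟩ : α ∈ cyl F := hσ ⟨σ.length, hασ⟩
  have hprefix : pre α n <+: pre α (σ.length + n) := pre_prefix_pre α (Nat.le_add_left _ _)
  exact (hα n).ne (coverWeight_of_prefix_mem hn hprefix)

theorem prefixFree.tsum_le_tsum_of_cyl_subset (hR : ∀ ρ, ∑' a, R (ρ ++ [a]) = R ρ)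
    {E : Set (List Γ)} (hE : prefixFree E) (hEF : cyl E ⊆ cyl F) :
    ∑' σ : E, R σ ≤ ∑' τ : F, R τ :=
  calc ∑' σ : E, R σ
      ≤ ∑' σ : E, coverWeight R F σ := ENNReal.tsum_le_tsum fun σ =>
        le_coverWeight_of_cyl_subset hR
          ((cyl_mono (Set.singleton_subset_iff.2 σ.2)).trans hEF)
    _ ≤ coverWeight R F [] :=
      hE.tsum_le_apply_nil (tsum_coverWeight_append_singleton_le (fun σ => (hR σ).le) F)
    _ ≤ ∑' τ : F, R τ := coverWeight_nil_le_tsum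

end CoverWeight

section MuR

variable {Γ : Type*} {r : List Γ → ℝ} {C D : Set (ℕ → Γ)}

lemma MeasRep.tsum_ofReal_append_singleton (hr : MeasRep r) (σ : List Γ) :
    ∑' a, ENNReal.ofReal (r (σ ++ [a])) = ENNReal.ofReal (r σ) := by
  rw [← (hr.2 σ).tsum_eq,
    ENNReal.ofReal_tsum_of_nonneg (fun a => (hr.1 _).1) (hr.2 σ).summable]

lemma muR_lt_iff {b : ℝ≥0∞} : muR r C < b ↔
    ∃ E, prefixFree E ∧ C ⊆ cyl E ∧ ∑' σ : E, ENNReal.ofReal (r σ) < b := by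
  simp only [muR, iInf_lt_iff, exists_prop]

lemma le_muR_iff {b : ℝ≥0∞} : b ≤ muR r C ↔
    ∀ E, prefixFree E → C ⊆ cyl E → b ≤ ∑' σ : E, ENNReal.ofReal (r σ) := by
  simp only [muR, le_iInf_iff]

lemma muR_le_tsum {S : Set (List Γ)} (hS : C ⊆ cyl S) :
    muR r C ≤ ∑' σ : S, ENNReal.ofReal (r σ) :=
  (le_muR_iff.1 le_rfl (prefixMinimal S) (prefixFree_prefixMinimal S)
    (hS.trans (cyl_subset_cyl_prefixMinimal S))).trans
    (ENNReal.tsum_mono_subtype (fun σ => ENNReal.ofReal (r σ)) (prefixMinimal_subset S))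

lemma muR_empty (r : List Γ → ℝ) : muR r ∅ = 0 :=
  nonpos_iff_eq_zero.1 <|
    (muR_le_tsum (Set.empty_subset (cyl ∅))).trans_eq tsum_empty

lemma muR_mono (r : List Γ → ℝ) (h : C ⊆ D) : muR r C ≤ muR r D :=
  le_muR_iff.2 fun _ _ hD => muR_le_tsum (h.trans hD)

lemma muR_iUnion_le {ι : Type*} [Countable ι] (r : List Γ → ℝ) (f : ι → Set (ℕ → Γ)) :
    muR r (⋃ i, f i) ≤ ∑' i, muR r (f i) := by
  refine ENNReal.le_of_forall_pos_le_add fun ε hε hfin => ?_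
  obtain ⟨δ, hδ, hδε⟩ := ENNReal.exists_pos_sum_of_countable (ENNReal.coe_pos.2 hε).ne' ι
  have hlt (i : ι) : muR r (f i) < muR r (f i) + δ i :=
    ENNReal.lt_add_right (ENNReal.ne_top_of_tsum_ne_top hfin.ne i) (ENNReal.coe_pos.2 (hδ i)).ne'
  choose E _ hcover hE using fun i => muR_lt_iff.1 (hlt i)
  have hunion : ⋃ i, f i ⊆ cyl (⋃ i, E i) :=
    Set.iUnion_subset fun i => (hcover i).trans (cyl_mono (Set.subset_iUnion E i))
  calc muR r (⋃ i, f i)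
      ≤ ∑' σ : ⋃ i, E i, ENNReal.ofReal (r σ) := muR_le_tsum hunion
    _ ≤ ∑' i, ∑' σ : E i, ENNReal.ofReal (r σ) :=
      ENNReal.tsum_iUnion_le_tsum (fun σ => ENNReal.ofReal (r σ)) E
    _ ≤ ∑' i, (muR r (f i) + δ i) := ENNReal.tsum_le_tsum fun i => (hE i).le
    _ = ∑' i, muR r (f i) + ∑' i, (δ i : ℝ≥0∞) := ENNReal.tsum_add
    _ ≤ ∑' i, muR r (f i) + ε := by gcongr

lemma MeasRep.muR_cyl (hr : MeasRep r) {E : Set (List Γ)} (hE : prefixFree E) :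
    muR r (cyl E) = ∑' σ : E, ENNReal.ofReal (r σ) :=
  le_antisymm (muR_le_tsum subset_rfl) <| le_muR_iff.2 fun _ _ hEF =>
    hE.tsum_le_tsum_of_cyl_subset (R := fun σ => ENNReal.ofReal (r σ))
      hr.tsum_ofReal_append_singleton hEF

end MuR

theorem stmt4_general {Ω : Type*} (r : List Ω → ℝ) (hr : MeasRep r) :
    muR r (∅ : Set (ℕ → Ω)) = 0 ∧
    (∀ C D : Set (ℕ → Ω), C ⊆ D → muR r C ≤ muR r D) ∧
    (∀ f : ℕ → Set (ℕ → Ω), muR r (⋃ i, f i) ≤ ∑' i, muR r (f i)) ∧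
    (∀ E : Set (List Ω), prefixFree E →
      muR r (cyl E) = ∑' σ : E, ENNReal.ofReal (r (σ : List Ω))) :=
  ⟨muR_empty r, fun _ _ => muR_mono r, muR_iUnion_le r, fun _ => hr.muR_cyl⟩

/-- `μ_r` is an outer measure on `Ω^∞`: it vanishes on `∅`, is
monotone, is countably subadditive, and agrees with `r` on open sets (which are
exactly the sets generated by prefix-free sets of strings). -/
theorem stmt4 {Ω : Type*} [Countable Ω] [Infinite Ω] (r : List Ω → ℝ)
    (hr : MeasRep r) :
    muR r (∅ : Set (ℕ → Ω)) = 0 ∧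
    (∀ C D : Set (ℕ → Ω), C ⊆ D → muR r C ≤ muR r D) ∧
    (∀ f : ℕ → Set (ℕ → Ω), muR r (⋃ i, f i) ≤ ∑' i, muR r (f i)) ∧
    (∀ E : Set (List Ω), prefixFree E →
      muR r (cyl E) = ∑' σ : E, ENNReal.ofReal (r (σ : List Ω))) :=
  stmt4_general r hr
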